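/- Let f be a multicritical circle map with irrational rotation number for which the real a-priori bounds hold with constant C = C(f), and let c, c′ be any two critical points of f. If Δ is an atom of the n-th dynamical partition P_n(c) and Δ′ is an atom of P_n(c′) such that Δ ∩ Δ′ ≠ ∅, then |Δ| and |Δ′| are comparable: K^{−1}|Δ′| ≤ |Δ| ≤ K|Δ′| for a constant K > 1 depending only on C(f). -/

import Mathlib

open Set Filter MeasureTheory

noncomputable section

/-- The Schwarzian derivative `Sf = (f''/f')' - (1/2) (f''/f')^2`. -/
def schwarzianDeriv (f : ℝ → ℝ) (x : ℝ) : ℝ :=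
  deriv (fun y => deriv (deriv f) y / deriv f y) x
    - (1 / 2) * (deriv (deriv f) x / deriv f x) ^ 2

/-- A multicritical circle map, described through its lift `F : ℝ → ℝ` to the real line.
It is an orientation-preserving `C^3` circle homeomorphism with finitely many critical
points `c 0, …, c (N-1)`, each of non-flat power-law type: near `c i` the derivative is
pinched between two multiples of `|x - c i| ^ (s i - 1)` with `s i > 1`, the Schwarzian
derivative is negative on a punctured neighborhood of each critical point, and
`log (F')` has bounded variation (bounded by `v`) off the critical neighborhoods. -/
structure MCM where
  /-- the lift of the circle map -/
  F : ℝ → ℝ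
  smooth : ContDiff ℝ 3 F
  mono : StrictMono F
  deg1 : ∀ x, F (x + 1) = F x + 1
  /-- number of critical points -/
  N : ℕ
  N_pos : 0 < N
  /-- the critical points (one representative in `[0,1)` for each) -/
  c : Fin N → ℝ
  c_mem : ∀ i, c i ∈ Set.Ico (0 : ℝ) 1
  c_inj : Function.Injective c
  isCrit : ∀ i, deriv F (c i) = 0
  critOnly : ∀ x, deriv F x = 0 → ∃ (i : Fin N) (k : ℤ), x = c i + (k : ℝ)
  /-- neighborhoods of the critical points -/
  W : Fin N → Set ℝ
  W_open : ∀ i, IsOpen (W i)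
  c_mem_W : ∀ i, c i ∈ W i
  /-- the criticalities (power-law exponents) -/
  s : Fin N → ℝ
  s_gt_one : ∀ i, 1 < s i
  al : Fin N → ℝ
  be : Fin N → ℝ
  al_pos : ∀ i, 0 < al i
  al_lt_be : ∀ i, al i < be i
  powerLaw : ∀ i, ∀ x ∈ W i, x ≠ c i →
    al i * |x - c i| ^ (s i - 1) < deriv F x ∧
      deriv F x < be i * |x - c i| ^ (s i - 1)
  negSchwarzian : ∀ i, ∀ x ∈ W i, x ≠ c i → schwarzianDeriv F x < 0
  /-- bound for the variation of `log DF` off the critical neighborhoods -/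
  v : ℝ
  v_pos : 0 < v
  logDF_var : eVariationOn (fun x => Real.log (deriv F x))
      (Set.Icc 0 1 \ ⋃ (i) (k : ℤ), (fun y => y + (k : ℝ)) '' W i) ≤ ENNReal.ofReal v

/-- The circle map with lift `F` has rotation number `ρ`. -/
def HasRotationNumber (F : ℝ → ℝ) (ρ : ℝ) : Prop :=
  Tendsto (fun n : ℕ => F^[n] 0 / n) atTop (nhds ρ)

/-- The Gauss map `x ↦ {1/x}`. -/
def gaussMap (x : ℝ) : ℝ := Int.fract x⁻¹

/-- Partial quotients `a_n` of the continued fraction expansion of `ρ ∈ (0,1)`. -/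
def cfDigit (ρ : ℝ) (n : ℕ) : ℕ := (⌊(gaussMap^[n] ρ)⁻¹⌋).toNat

/-- Return times: the denominators `q_n` of the convergents of `ρ`,
`q_0 = 1`, `q_1 = a_0`, `q_{n+1} = a_n q_n + q_{n-1}`. -/
def qDen (ρ : ℝ) : ℕ → ℕ
  | 0 => 1
  | 1 => cfDigit ρ 0
  | n + 2 => cfDigit ρ (n + 1) * qDen ρ (n + 1) + qDen ρ n

/-- Numerators `p_n` of the convergents of `ρ`:
`p_0 = 0`, `p_1 = 1`, `p_{n+1} = a_n p_n + p_{n-1}`. -/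
def pNum (ρ : ℝ) : ℕ → ℕ
  | 0 => 0
  | 1 => 1
  | n + 2 => cfDigit ρ (n + 1) * pNum ρ (n + 1) + pNum ρ n

/-- The lift of the atom `I_ℓ^j(x) = f^j(I_ℓ(x))`, where `I_ℓ(x)` is the interval with
endpoints `x` and `f^{q_ℓ}(x)`; the lift of `f^{q_ℓ}(x)` adjacent to `x` is
`F^[q_ℓ] x - p_ℓ`. -/
def atomSet (F : ℝ → ℝ) (ρ x : ℝ) (ℓ j : ℕ) : Set ℝ :=
  Set.uIcc (F^[j] x) (F^[j + qDen ρ ℓ] x - (pNum ρ ℓ : ℝ))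

/-- The length of the atom `I_ℓ^j(x)`. -/
def atomLen (F : ℝ → ℝ) (ρ x : ℝ) (ℓ j : ℕ) : ℝ :=
  |F^[j + qDen ρ ℓ] x - (pNum ρ ℓ : ℝ) - F^[j] x|

/-- The two endpoints (as lifts) of the atom `I_ℓ^j(x)`. -/
def atomEnds (F : ℝ → ℝ) (ρ x : ℝ) (ℓ j : ℕ) : Set ℝ :=
  {F^[j] x, F^[j + qDen ρ ℓ] x - (pNum ρ ℓ : ℝ)}

/-- `(ℓ, j)` indexes an atom of the `n`-th dynamical partition
`P_n(x) = {I_n^i(x) : i < q_{n+1}} ∪ {I_{n+1}^j(x) : j < q_n}`. -/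
def IsAtomIdx (ρ : ℝ) (n ℓ j : ℕ) : Prop :=
  (ℓ = n ∧ j < qDen ρ (n + 1)) ∨ (ℓ = n + 1 ∧ j < qDen ρ n)

/-- Two distinct atoms are adjacent when they share an endpoint on the circle,
i.e. when some endpoints of their lifts differ by an integer. -/
def AdjacentAtoms (F : ℝ → ℝ) (ρ x : ℝ) (ℓ₁ j₁ ℓ₂ j₂ : ℕ) : Prop :=
  (ℓ₁, j₁) ≠ (ℓ₂, j₂) ∧
    ∃ u ∈ atomEnds F ρ x ℓ₁ j₁, ∃ w ∈ atomEnds F ρ x ℓ₂ j₂, ∃ k : ℤ, w = u + (k : ℝ)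

/-- The real a-priori bounds hold for `f` with constant `C`: any two adjacent atoms of any
dynamical partition `P_n(c_k)` have lengths comparable with constant `C`. -/
def RealBounds (f : MCM) (ρ : ℝ) (C : ℝ) : Prop :=
  ∀ (k : Fin f.N) (n ℓ₁ j₁ ℓ₂ j₂ : ℕ),
    IsAtomIdx ρ n ℓ₁ j₁ → IsAtomIdx ρ n ℓ₂ j₂ →
    AdjacentAtoms f.F ρ (f.c k) ℓ₁ j₁ ℓ₂ j₂ →
    C⁻¹ * atomLen f.F ρ (f.c k) ℓ₂ j₂ ≤ atomLen f.F ρ (f.c k) ℓ₁ j₁ ∧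
      atomLen f.F ρ (f.c k) ℓ₁ j₁ ≤ C * atomLen f.F ρ (f.c k) ℓ₂ j₂

/-! ### Continued fraction facts -/

lemma gauss_iter_mem {ρ : ℝ} (hρ : Irrational ρ) (h01 : ρ ∈ Set.Ioo (0 : ℝ) 1) (n : ℕ) :
    Irrational (gaussMap^[n] ρ) ∧ gaussMap^[n] ρ ∈ Set.Ioo (0 : ℝ) 1 := by
  induction n with
  | zero => exact ⟨hρ, h01⟩
  | succ n ih =>
    rw [Function.iterate_succ_apply']
    obtain ⟨h1, h2⟩ := ih
    have h3 : Irrational (gaussMap (gaussMap^[n] ρ)) := by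
      unfold gaussMap Int.fract
      exact (irrational_inv_iff.2 h1).sub_intCast _
    refine ⟨h3, lt_of_le_of_ne (Int.fract_nonneg _) (fun h => h3.ne_zero h.symm), Int.fract_lt_one _⟩

lemma gauss_succ {ρ : ℝ} (hρ : Irrational ρ) (h01 : ρ ∈ Set.Ioo (0 : ℝ) 1) (n : ℕ) :
    1 ≤ cfDigit ρ n ∧
      (cfDigit ρ n : ℝ) = (gaussMap^[n] ρ)⁻¹ - gaussMap^[n + 1] ρ := by
  obtain ⟨-, h0, h1⟩ := gauss_iter_mem hρ h01 n
  have hfl : 1 ≤ ⌊(gaussMap^[n] ρ)⁻¹⌋ := by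
    rw [Int.le_floor]
    simpa using (one_le_inv₀ h0).2 h1.le
  constructor
  · unfold cfDigit; omega
  · rw [Function.iterate_succ_apply']
    have : ((cfDigit ρ n : ℕ) : ℤ) = ⌊(gaussMap^[n] ρ)⁻¹⌋ := by
      unfold cfDigit; omega
    have h2 : (cfDigit ρ n : ℝ) = (⌊(gaussMap^[n] ρ)⁻¹⌋ : ℝ) := by
      exact_mod_cast congrArg (Int.cast : ℤ → ℝ) this
    rw [h2]
    unfold gaussMap Int.fract
    ring

lemma theta_succ {ρ : ℝ} (hρ : Irrational ρ) (h01 : ρ ∈ Set.Ioo (0 : ℝ) 1) (n : ℕ) :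
    (qDen ρ (n + 1) : ℝ) * ρ - pNum ρ (n + 1) =
      -(gaussMap^[n + 1] ρ) * ((qDen ρ n : ℝ) * ρ - pNum ρ n) := by
  induction n with
  | zero =>
    have h := (gauss_succ hρ h01 0).2
    have h0 : ρ ≠ 0 := h01.1.ne'
    simp only [qDen, pNum, Function.iterate_zero, id] at h ⊢
    rw [h]
    push_cast
    field_simp
    ring
  | succ n ih =>
    have h := (gauss_succ hρ h01 (n + 1)).2
    have h0 : gaussMap^[n + 1] ρ ≠ 0 := (gauss_iter_mem hρ h01 (n + 1)).2.1.ne'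
    have e : (qDen ρ (n + 1 + 1) : ℝ) * ρ - pNum ρ (n + 1 + 1) =
        cfDigit ρ (n + 1) * ((qDen ρ (n + 1) : ℝ) * ρ - pNum ρ (n + 1))
          + ((qDen ρ n : ℝ) * ρ - pNum ρ n) := by
      simp only [qDen, pNum]
      push_cast
      ring
    rw [e, ih, h]
    field_simp
    ring

lemma theta_pos {ρ : ℝ} (hρ : Irrational ρ) (h01 : ρ ∈ Set.Ioo (0 : ℝ) 1) (n : ℕ) :
    0 < (-1 : ℝ) ^ n * ((qDen ρ n : ℝ) * ρ - pNum ρ n) := by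
  induction n with
  | zero => simpa [qDen, pNum] using h01.1
  | succ n ih =>
    rw [theta_succ hρ h01 n, pow_succ]
    have := mul_pos (gauss_iter_mem hρ h01 (n + 1)).2.1 ih
    linarith

lemma theta_sum_pos {ρ : ℝ} (hρ : Irrational ρ) (h01 : ρ ∈ Set.Ioo (0 : ℝ) 1) (n : ℕ) :
    0 < (-1 : ℝ) ^ n * (((qDen ρ n : ℝ) * ρ - pNum ρ n) +
      ((qDen ρ (n + 1) : ℝ) * ρ - pNum ρ (n + 1))) := by
  rw [theta_succ hρ h01 n]
  have := mul_pos (sub_pos.2 (gauss_iter_mem hρ h01 (n + 1)).2.2) (theta_pos hρ h01 n)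
  linarith

lemma qDen_pos {ρ : ℝ} (hρ : Irrational ρ) (h01 : ρ ∈ Set.Ioo (0 : ℝ) 1) (n : ℕ) :
    0 < qDen ρ n ∧ qDen ρ n ≤ qDen ρ (n + 1) := by
  induction n with
  | zero =>
    have := (gauss_succ hρ h01 0).1
    simp [qDen]; omega
  | succ n ih =>
    have := (gauss_succ hρ h01 (n + 1)).1
    refine ⟨by omega, ?_⟩
    show _ ≤ cfDigit ρ (n + 1) * qDen ρ (n + 1) + qDen ρ n
    nlinarith

/-! ### Rotation number -/

lemma rot_sign (f : MCM) {ρ : ℝ} (h : HasRotationNumber f.F ρ) (s : ℝ) (hs : s = 1 ∨ s = -1)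
    (m : ℕ) (r : ℤ) (hpos : 0 < s * (m * ρ - r)) (x : ℝ) :
    0 < s * (f.F^[m] x - r - x) := by
  let g : CircleDeg1Lift := ⟨⟨f.F, f.mono.monotone⟩, f.deg1⟩
  have hg : ∀ k : ℕ, ⇑(g ^ k) = f.F^[k] := fun k => g.coe_pow k
  have hτ : g.translationNumber = ρ := by
    have h1 := g.tendsto_translation_number₀
    simp only [hg] at h1
    exact tendsto_nhds_unique h1 h
  have hτm : (g ^ m).translationNumber = m * ρ := by
    rw [CircleDeg1Lift.translationNumber_pow, hτ]
  rw [← hg]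
  rcases hs with rfl | rfl
  · have : (r : ℝ) < (g ^ m).translationNumber := by rw [hτm]; linarith
    have := (g ^ m).lt_map_of_int_lt_translationNumber this x
    linarith
  · have : (g ^ m).translationNumber < (r : ℝ) := by rw [hτm]; linarith
    have := (g ^ m).map_lt_of_translationNumber_lt_int this x
    linarith

/-! ### The combinatorial core -/

lemma iter_shift {F : ℝ → ℝ} (hk : ∀ x (k : ℤ), F (x + k) = F x + k) (m : ℕ) (x : ℝ) (k : ℤ) :
    F^[m] (x + k) = F^[m] x + k := by
  induction m generalizing x with
  | zero => rfl
  | succ m ih => rw [Function.iterate_succ_apply, hk, ih, Function.iterate_succ_apply]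

lemma iter_shift_sub {F : ℝ → ℝ} (hk : ∀ x (k : ℤ), F (x + k) = F x + k) (m : ℕ) (x : ℝ)
    (k : ℤ) : F^[m] (x - k) = F^[m] x - k := by
  have := iter_shift hk m x (-k)
  push_cast at this
  simpa [sub_eq_add_neg] using this

lemma core_cover {F : ℝ → ℝ} (hk : ∀ x (k : ℤ), F (x + k) = F x + k)
    (q Q : ℕ) (p P : ℤ) (hqQ : q ≤ Q)
    (hg : ∀ x, x ≤ F^[q] x - p) (hh : ∀ x, F^[Q] x - P ≤ x)
    (x C : ℝ) (hC : 1 < C)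
    (b1 : ∀ j, j + q < Q →
      F^[j + q + q] x - p - F^[j + q] x ≤ C * (F^[j + q] x - p - F^[j] x) ∧
      F^[j + q] x - p - F^[j] x ≤ C * (F^[j + q + q] x - p - F^[j + q] x))
    (b3 : ∀ i k, i < Q → k < q → i + q = k + Q →
      F^[k] x - (F^[k + Q] x - P) ≤ C * (F^[i + q] x - p - F^[i] x) ∧
      F^[i + q] x - p - F^[i] x ≤ C * (F^[k] x - (F^[k + Q] x - P)))
    (b4 : ∀ k, k < q →
      F^[k] x - (F^[k + Q] x - P) ≤ C * (F^[k + q] x - p - F^[k] x) ∧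
      F^[k + q] x - p - F^[k] x ≤ C * (F^[k] x - (F^[k + Q] x - P)))
    (α β : ℝ)
    (hΔ : (∃ i < Q, α = F^[i] x ∧ β = F^[i + q] x - p) ∨
      (∃ k < q, α = F^[k + Q] x - P ∧ β = F^[k] x)) :
    α ≤ β ∧ (F^[q] β - p) - β ≤ (C + C ^ 2) * (β - α) ∧
      ∃ e, F^[q] e - p ≤ α ∧ α - e ≤ (C + C ^ 2) * (β - α) := by
  have it : ∀ m z, F^[q] (F^[m] z) = F^[m + q] z := fun m z => by
    rw [add_comm, Function.iterate_add_apply]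
  have iQ : ∀ m z, F^[Q] (F^[m] z) = F^[m + Q] z := fun m z => by
    rw [add_comm, Function.iterate_add_apply]
  rcases hΔ with ⟨i, hi, rfl, rfl⟩ | ⟨k, hkq, rfl, rfl⟩
  · have hL : F^[i] x ≤ F^[i + q] x - p := by have := hg (F^[i] x); rwa [it] at this
    have hL0 : 0 ≤ F^[i + q] x - p - F^[i] x := by linarith
    set L := F^[i + q] x - p - F^[i] x with hLdef
    have hC2 : C * L ≤ (C + C ^ 2) * L := by nlinarith [mul_nonneg (sq_nonneg C) hL0]
    refine ⟨hL, ?_, ?_⟩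
    · rw [iter_shift_sub hk, it]
      by_cases hc : i + q < Q
      · have := (b1 i hc).1
        linarith
      · obtain ⟨k, hk'⟩ : ∃ k, i + q = k + Q := ⟨i + q - Q, by omega⟩
        have hkq : k < q := by omega
        have h1 := (b3 i k hi hkq hk').1
        have h2 := (b4 k hkq).2
        have h3 := hh (F^[k + q] x)
        rw [iQ] at h3
        have e1 : i + q + q = k + q + Q := by omega
        rw [e1, hk']
        rw [hk'] at hLdef h1
        rw [← hLdef] at h1
        have h4 := mul_le_mul_of_nonneg_left h1 (by linarith : (0 : ℝ) ≤ C)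
        have : C * (C * L) = C ^ 2 * L := by ring
        linarith
    · by_cases hc : q ≤ i
      · obtain ⟨j, rfl⟩ : ∃ j, i = j + q := ⟨i - q, by omega⟩
        refine ⟨F^[j] x + p, ?_, ?_⟩
        · rw [iter_shift hk, it]; linarith
        · have := (b1 j hi).2
          linarith [this]
      · push Not at hc
        obtain ⟨j, hj⟩ : ∃ j, j + q = i + Q := ⟨i + Q - q, by omega⟩
        have h1 := (b4 i hc).1
        have h2 := (b3 j i (by omega) hc hj).2
        have h3 := hh (F^[i] x)
        rw [iQ] at h3
        refine ⟨F^[j] x + p - P, ?_, ?_⟩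
        · rw [iter_shift_sub hk, iter_shift hk, it, hj]; linarith
        · rw [hj] at h2
          have h4 := mul_le_mul_of_nonneg_left h1 (by linarith : (0 : ℝ) ≤ C)
          have : C * (C * L) = C ^ 2 * L := by ring
          linarith
  · have hL : F^[k + Q] x - P ≤ F^[k] x := by have := hh (F^[k] x); rwa [iQ] at this
    have hL0 : 0 ≤ F^[k] x - (F^[k + Q] x - P) := by linarith
    set L := F^[k] x - (F^[k + Q] x - P) with hLdef
    have hC2 : C * L ≤ (C + C ^ 2) * L := by nlinarith [mul_nonneg (sq_nonneg C) hL0]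
    refine ⟨hL, ?_, ?_⟩
    · rw [it]
      have := (b4 k hkq).2
      linarith
    · obtain ⟨j, hj⟩ : ∃ j, j + q = k + Q := ⟨k + Q - q, by omega⟩
      have h2 := (b3 j k (by omega) hkq hj).2
      refine ⟨F^[j] x + p - P, ?_, ?_⟩
      · rw [iter_shift_sub hk, iter_shift hk, it, hj]; linarith
      · rw [hj] at h2
        linarith

lemma core_meet {F : ℝ → ℝ} (hm : StrictMono F)
    (q Q : ℕ) (p P : ℤ)
    (hgh : ∀ x, x < F^[q] (F^[Q] x - P) - p)
    (α β M e α' β' : ℝ)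
    (h1 : (F^[q] β - p) - β ≤ M) (h2 : F^[q] e - p ≤ α) (h3 : α - e ≤ M)
    (hΔ' : β' = F^[q] α' - p ∨ α' = F^[Q] β' - P)
    (hi : α ≤ β') (hi' : α' ≤ β) : β' - α' ≤ (β - α) + 2 * M := by
  have hmq : StrictMono F^[q] := hm.iterate q
  rcases hΔ' with h | h
  · have hb : β' ≤ F^[q] β - p := by
      have := hmq.monotone hi'
      linarith
    have he : e ≤ α' := hmq.le_iff_le.1 (by linarith)
    linarith
  · have hx := hgh β'
    rw [← h] at hx
    have hb : β' ≤ F^[q] β - p := by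
      have := hmq.monotone hi'
      linarith
    have he : e ≤ α' := hmq.le_iff_le.1 (by linarith)
    linarith

/-! ### Conjugation by a sign -/

lemma conj_iter (F : ℝ → ℝ) (s : ℤ) (hs : s = 1 ∨ s = -1) (m : ℕ) (x : ℝ) :
    (fun y => (s : ℝ) * F (s * y))^[m] x = s * F^[m] (s * x) := by
  have hss : (s : ℝ) * s = 1 := by rcases hs with rfl | rfl <;> norm_num
  induction m generalizing x with
  | zero => simp [← mul_assoc, hss]
  | succ m ih =>
    rw [Function.iterate_succ_apply, ih, Function.iterate_succ_apply]
    simp only [← mul_assoc, hss, one_mul]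

lemma upper_bound (C : ℝ) (hC : 1 < C) (f : MCM) (ρ : ℝ) (hρ : Irrational ρ)
    (h01 : ρ ∈ Set.Ioo (0 : ℝ) 1) (hrot : HasRotationNumber f.F ρ) (hRB : RealBounds f ρ C)
    (i i' : Fin f.N) (n ℓ j ℓ' j' : ℕ) (hidx : IsAtomIdx ρ n ℓ j) (hidx' : IsAtomIdx ρ n ℓ' j')
    (hint : ∃ u ∈ atomSet f.F ρ (f.c i) ℓ j, ∃ u' ∈ atomSet f.F ρ (f.c i') ℓ' j',
            ∃ k : ℤ, u' = u + (k : ℝ)) :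
    atomLen f.F ρ (f.c i') ℓ' j' ≤ (1 + 2 * (C + C ^ 2)) * atomLen f.F ρ (f.c i) ℓ j := by
  obtain ⟨s, hs, hsn⟩ : ∃ s : ℤ, (s = 1 ∨ s = -1) ∧ (s : ℝ) = (-1) ^ n :=
    ⟨(-1) ^ n, neg_one_pow_eq_or ℤ n, by push_cast; rfl⟩
  have hsR : (s : ℝ) = 1 ∨ (s : ℝ) = -1 := by rcases hs with rfl | rfl <;> simp
  have hss : (s : ℝ) * s = 1 := by rcases hs with rfl | rfl <;> norm_num
  have hss' : ∀ z : ℝ, (s : ℝ) * (s * z) = z := fun z => by rw [← mul_assoc, hss, one_mul]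
  have hsz : ∀ k : ℤ, s * (s * k) = k := fun k => by rcases hs with rfl | rfl <;> simp
  have habs : ∀ z : ℝ, 0 ≤ s * z → |z| = s * z := fun z hz => by
    have h1 : |(s : ℝ)| = 1 := by rcases hs with rfl | rfl <;> simp
    rw [← abs_of_nonneg hz, abs_mul, h1, one_mul]
  have hmemI : ∀ u a b : ℝ, s * a ≤ s * b → u ∈ Set.uIcc a b → s * a ≤ s * u ∧ s * u ≤ s * b := by
    intro u a b hab hu
    rcases hsR with h | h
    · rw [h] at hab ⊢
      rw [Set.uIcc_of_le (by linarith)] at hu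
      exact ⟨by linarith [hu.1], by linarith [hu.2]⟩
    · rw [h] at hab ⊢
      rw [Set.uIcc_of_ge (by linarith)] at hu
      exact ⟨by linarith [hu.2], by linarith [hu.1]⟩
  have shiftF : ∀ x (k : ℤ), f.F (x + k) = f.F x + k := by
    let g : CircleDeg1Lift := ⟨⟨f.F, f.mono.monotone⟩, f.deg1⟩
    intro x k
    exact g.map_add_int x k
  obtain ⟨hq0, hqQ⟩ := qDen_pos hρ h01 n
  -- sign facts
  have sg : ∀ x, 0 < s * (f.F^[qDen ρ n] x - pNum ρ n - x) := fun x => by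
    have := rot_sign f hrot s hsR (qDen ρ n) (pNum ρ n) (by
      rw [hsn]; exact_mod_cast theta_pos hρ h01 n) x
    exact_mod_cast this
  have sh : ∀ x, 0 < s * (x - (f.F^[qDen ρ (n + 1)] x - pNum ρ (n + 1))) := fun x => by
    have h0 := theta_pos hρ h01 (n + 1)
    rw [pow_succ, ← hsn] at h0
    have := rot_sign f hrot (-s) (by rcases hs with rfl | rfl <;> simp)
      (qDen ρ (n + 1)) (pNum ρ (n + 1)) (by push_cast; linarith) x
    push_cast at this
    linarith
  have sgh : ∀ x, 0 < s * (f.F^[qDen ρ n + qDen ρ (n + 1)] x - pNum ρ n - pNum ρ (n + 1) - x) :=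
    fun x => by
    have h0 := theta_sum_pos hρ h01 n
    rw [← hsn] at h0
    have := rot_sign f hrot s hsR (qDen ρ n + qDen ρ (n + 1)) (pNum ρ n + pNum ρ (n + 1))
      (by push_cast; linarith) x
    push_cast at this
    linarith
  set q := qDen ρ n with hq
  set Q := qDen ρ (n + 1) with hQ
  set p := pNum ρ n with hp
  set P := pNum ρ (n + 1) with hP
  have itq : ∀ r m z, f.F^[r] (f.F^[m] z) = f.F^[m + r] z := fun r m z => by
    rw [add_comm, Function.iterate_add_apply]
  -- lengths
  have lenN : ∀ c m, atomLen f.F ρ c n m = s * f.F^[m + q] c - (s * p : ℝ) - s * f.F^[m] c := by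
    intro c m
    have h := sg (f.F^[m] c)
    rw [itq] at h
    rw [atomLen, ← hq, ← hp, habs _ h.le]
    ring
  have lenS : ∀ c m, atomLen f.F ρ c (n + 1) m =
      s * f.F^[m] c - (s * f.F^[m + Q] c - (s * P : ℝ)) := by
    intro c m
    have h := sh (f.F^[m] c)
    rw [itq] at h
    rw [atomLen, ← hQ, ← hP, abs_sub_comm, habs _ h.le]
    ring
  -- the conjugated map
  set G : ℝ → ℝ := fun y => (s : ℝ) * f.F (s * y) with hG
  have Git : ∀ m z, G^[m] (s * z) = s * f.F^[m] z := fun m z => by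
    rw [hG, conj_iter f.F s hs, hss']
  have Git' : ∀ m z, G^[m] z = s * f.F^[m] (s * z) := fun m z => by
    rw [hG, conj_iter f.F s hs]
  have hGm : StrictMono G := by
    intro a b hab
    rcases hsR with h | h
    · simp only [hG, h, one_mul]; exact f.mono hab
    · simp only [hG, h, neg_mul, one_mul]
      exact neg_lt_neg (f.mono (neg_lt_neg hab))
  have hGk : ∀ x (k : ℤ), G (x + k) = G x + k := by
    intro x k
    have := shiftF (s * x) (s * k)
    simp only [hG]
    rw [mul_add]
    push_cast at this
    rw [this, mul_add, hss']
  have hGg : ∀ x, x ≤ G^[q] x - ((s * p : ℤ) : ℝ) := fun x => by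
    have := sg (s * x)
    rw [Git']
    push_cast
    have e := hss' x
    linarith
  have hGh : ∀ x, G^[Q] x - ((s * P : ℤ) : ℝ) ≤ x := fun x => by
    have := sh (s * x)
    rw [Git']
    push_cast
    have e := hss' x
    linarith
  have hGgh : ∀ x, x < G^[q] (G^[Q] x - ((s * P : ℤ) : ℝ)) - ((s * p : ℤ) : ℝ) := fun x => by
    have := sgh (s * x)
    rw [iter_shift_sub hGk, ← Function.iterate_add_apply, Git']
    push_cast
    have e := hss' x
    linarith
  -- describe an atom as an ordered interval
  have desc : ∀ (c : ℝ) (ℓ j : ℕ), IsAtomIdx ρ n ℓ j → ∃ α β : ℝ,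
      ((∃ i < Q, α = G^[i] (s * c) ∧ β = G^[i + q] (s * c) - ((s * p : ℤ) : ℝ)) ∨
      (∃ k < q, α = G^[k + Q] (s * c) - ((s * P : ℤ) : ℝ) ∧ β = G^[k] (s * c))) ∧
      atomLen f.F ρ c ℓ j = β - α ∧
      ∀ u ∈ atomSet f.F ρ c ℓ j, α ≤ s * u ∧ s * u ≤ β := by
    rintro c ℓ j (⟨rfl, hj⟩ | ⟨rfl, hj⟩)
    · refine ⟨_, _, Or.inl ⟨j, hj, rfl, rfl⟩, ?_, ?_⟩
      · rw [lenN, Git, Git]; push_cast; ring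
      · intro u hu
        have h := sg (f.F^[j] c)
        rw [itq] at h
        have := hmemI u _ _ (by rw [← hq, ← hp]; linarith) hu
        rw [← hq, ← hp] at this
        rw [Git, Git]
        push_cast
        exact ⟨this.1, by linarith [this.2]⟩
    · refine ⟨_, _, Or.inr ⟨j, hj, rfl, rfl⟩, ?_, ?_⟩
      · rw [lenS, Git, Git]; push_cast; ring
      · intro u hu
        have h := sh (f.F^[j] c)
        rw [itq] at h
        rw [atomSet, Set.uIcc_comm] at hu
        have := hmemI u _ _ (by rw [← hQ, ← hP]; linarith) hu
        rw [← hQ, ← hP] at this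
        rw [Git, Git]
        push_cast
        exact ⟨by linarith [this.1], this.2⟩
  obtain ⟨α, β, hD, hlen, hmem⟩ := desc (f.c i) ℓ j hidx
  obtain ⟨α', β', hD', hlen', hmem'⟩ := desc (f.c i') ℓ' j' hidx'
  have flip : ∀ {a b : ℝ}, C⁻¹ * b ≤ a ∧ a ≤ C * b → a ≤ C * b ∧ b ≤ C * a := by
    intro a b h
    refine ⟨h.2, ?_⟩
    have := (inv_mul_le_iff₀ (by linarith : (0 : ℝ) < C)).1 h.1
    exact this
  have cov := core_cover hGk q Q (s * p) (s * P) hqQ hGg hGh (s * f.c i) C hC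
    (by
      intro m hm
      have := flip (hRB i n n (m + q) n m (Or.inl ⟨rfl, hm⟩) (Or.inl ⟨rfl, by omega⟩)
        ⟨by simp; omega, f.F^[m + q] (f.c i), Or.inl rfl,
          f.F^[m + q] (f.c i) - (p : ℝ), Or.inr rfl, -(p : ℤ), by push_cast; ring⟩)
      rw [lenN, lenN] at this
      simp only [Git]
      push_cast
      exact this)
    (by
      intro m k hm hkq hmk
      have := flip (hRB i n (n + 1) k n m (Or.inr ⟨rfl, hkq⟩) (Or.inl ⟨rfl, hm⟩)
        ⟨by simp, f.F^[k + Q] (f.c i) - (P : ℝ), Or.inr rfl,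
          f.F^[m + q] (f.c i) - (p : ℝ), Or.inr rfl, (P : ℤ) - (p : ℤ), by
            rw [hmk]; push_cast; ring⟩)
      rw [lenN, lenS] at this
      simp only [Git]
      push_cast
      exact this)
    (by
      intro k hkq
      have := flip (hRB i n (n + 1) k n k (Or.inr ⟨rfl, hkq⟩)
        (Or.inl ⟨rfl, lt_of_lt_of_le hkq hqQ⟩)
        ⟨by simp, f.F^[k] (f.c i), Or.inl rfl, f.F^[k] (f.c i), Or.inl rfl, 0, by simp⟩)
      rw [lenN, lenS] at this
      simp only [Git]
      push_cast
      exact this) α β hD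
  obtain ⟨hαβ, h1, e, h2, h3⟩ := cov
  obtain ⟨u, hu, u', hu', k, hk⟩ := hint
  have m1 := hmem u hu
  have m2 := hmem' u' hu'
  rw [hk] at m2
  have hfin := core_meet hGm q Q (s * p) (s * P) hGgh α β ((C + C ^ 2) * (β - α)) e
    (α' - ((s * k : ℤ) : ℝ)) (β' - ((s * k : ℤ) : ℝ)) h1 h2 h3
    (by
      rcases hD' with ⟨m, -, rfl, rfl⟩ | ⟨m, -, rfl, rfl⟩
      · left
        rw [iter_shift_sub hGk, add_comm m q, Function.iterate_add_apply]
        ring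
      · right
        rw [iter_shift_sub hGk, add_comm m Q, Function.iterate_add_apply]
        ring)
    (by push_cast; linarith [m1.1, m2.2])
    (by push_cast; linarith [m1.2, m2.1])
  rw [hlen, hlen']
  linarith

/-- **intersecting atoms are comparable.** For every `C > 1` there is
`K > 1`, depending only on `C`, such that: if the real bounds hold for `f` with constant
`C`, and `Δ ∈ P_n(c)`, `Δ′ ∈ P_n(c′)` are atoms of the level-`n` dynamical partitions of
two critical points which intersect on the circle, then `|Δ| ≍ |Δ′|` with constant `K`. -/
theorem intersecting_atoms_comparable :
    ∀ C : ℝ, 1 < C → ∃ K : ℝ, 1 < K ∧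
      ∀ (f : MCM) (ρ : ℝ), Irrational ρ → ρ ∈ Set.Ioo (0 : ℝ) 1 →
        HasRotationNumber f.F ρ → RealBounds f ρ C →
        ∀ (i i' : Fin f.N) (n ℓ j ℓ' j' : ℕ),
          IsAtomIdx ρ n ℓ j → IsAtomIdx ρ n ℓ' j' →
          (∃ u ∈ atomSet f.F ρ (f.c i) ℓ j, ∃ u' ∈ atomSet f.F ρ (f.c i') ℓ' j',
            ∃ k : ℤ, u' = u + (k : ℝ)) →
          K⁻¹ * atomLen f.F ρ (f.c i') ℓ' j' ≤ atomLen f.F ρ (f.c i) ℓ j ∧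
            atomLen f.F ρ (f.c i) ℓ j ≤ K * atomLen f.F ρ (f.c i') ℓ' j' := by
  intro C hC
  have hK : 1 < 1 + 2 * (C + C ^ 2) := by nlinarith
  refine ⟨1 + 2 * (C + C ^ 2), hK, ?_⟩
  intro f ρ hρ h01 hrot hRB i i' n ℓ j ℓ' j' hidx hidx' hint
  constructor
  · rw [inv_mul_le_iff₀ (by linarith)]
    exact upper_bound C hC f ρ hρ h01 hrot hRB i i' n ℓ j ℓ' j' hidx hidx' hint
  · refine upper_bound C hC f ρ hρ h01 hrot hRB i' i n ℓ' j' ℓ j hidx' hidx ?_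
    obtain ⟨u, hu, u', hu', k, hk⟩ := hint
    exact ⟨u', hu', u, hu, -k, by rw [hk]; push_cast; ring⟩
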